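/- Let P be a finite poset and S_*(P) ⊆ C̃_*(P) a synor complex for P. Then for each k ≥ −1 there exists a K-linear map ρ_k : C̃_k(P) → S_k(P) such that: (R0) ρ_{−1} is the identity on C̃_{−1}(P) = K (sending the empty chain to itself, viewed as a (−1)-synor chain); (R1) ρ_{k−1} ∘ ∂_k = ∂_k ∘ ρ_k for all k ≥ 0; (R2) for every order chain c = (x₀ > ⋯ > x_k), the chain ρ_k(c) is supported in P_{≤x₀}, i.e. ρ_k(c) ∈ ⊕_{y ≤ x₀} S_k(P)^{(y)}. -/

import Mathlib

open Finsupp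

noncomputable section

variable (K : Type) [Field K]

section Core
variable (P : Type) [Preorder P]

/-- Order chains with `n` elements of the poset `P`, written as strictly
decreasing tuples `(x₀ > x₁ > ⋯ > x_{n-1})`. -/
def OChain (n : ℕ) : Type := {c : Fin n → P // StrictAnti c}

/-- The chain group in "level" `n`: the `K`-vector space with basis the order chains with
`n` elements.  Level `n` corresponds to homological degree `n - 1`; in particular
`CGrp K P 0 ≅ K` is the reduced part `C̃₋₁`. -/
abbrev CGrp (n : ℕ) : Type := OChain P n →₀ K

/-- Deletion of the `k`-th entry of an order chain. -/
def odel {n : ℕ} (k : Fin (n + 1)) (c : OChain P (n + 1)) : OChain P n :=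
  ⟨c.1 ∘ k.succAbove, c.2.comp_strictMono (Fin.strictMono_succAbove k)⟩

/-- The simplicial boundary map (of the reduced simplicial chain complex of the order
complex), from level `n+1` to level `n`. -/
def cbdry (n : ℕ) : CGrp K P (n + 1) →ₗ[K] CGrp K P n :=
  Finsupp.lsum K fun c => ∑ k : Fin (n + 1), ((-1 : K) ^ (k : ℕ)) • Finsupp.lsingle (odel P k c)

/-- The cycles in level `n` (every level-0 chain, i.e. multiple of the empty chain,
is a cycle). -/
def cyclesAt : (n : ℕ) → Submodule K (CGrp K P n)
  | 0 => ⊤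
  | (n + 1) => LinearMap.ker (cbdry K P n)

/-- The boundaries in level `n`. -/
def boundariesIn (n : ℕ) : Submodule K (CGrp K P n) :=
  LinearMap.range (cbdry K P n)

/-- `H̃_{n-1}(P) ≠ 0`: nontriviality of the reduced simplicial homology (with coefficients
in `K`) of the order complex of `P` in degree `n - 1` (level `n`). -/
def RHomNontrivial (n : ℕ) : Prop := ¬ cyclesAt K P n ≤ boundariesIn K P n

/-- The subspace of chains all of whose elements lie in the subset `J ⊆ P`
(the chain group of the subposet `J`). -/
def chainsIn (J : Set P) (n : ℕ) : Submodule K (CGrp K P n) :=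
  Finsupp.supported K K {c : OChain P n | ∀ r, c.1 r ∈ J}

/-- Transport of chain groups along an equality of levels. -/
def castCGrp {a b : ℕ} (h : a = b) : CGrp K P a ≃ₗ[K] CGrp K P b :=
  Finsupp.domLCongr (Equiv.cast (congrArg (OChain P) h))

end Core


section Synor
variable (P : Type) [PartialOrder P]

/-- For a family `S` of graded pieces (with `S n x` the piece of homological degree `n`,
i.e. level `n+1`, sitting over `x ∈ P`) and a subset `J ⊆ P`, the part of the complex
lying over `J`: at level `0` it is all of `C̃₋₁ = K`, and at level `n+1` it is
`⊕_{x ∈ J} S_n^{(x)}`. -/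
def idealPart (S : (n : ℕ) → P → Submodule K (CGrp K P (n + 1))) (J : Set P) :
    (nn : ℕ) → Submodule K (CGrp K P nn)
  | 0 => ⊤
  | (n + 1) => ⨆ x ∈ J, S n x

/-- A synor complex for the finite poset `P`: a strictly `P`-graded subcomplex
`S_*(P) ⊆ C̃_*(P)` of the reduced simplicial chain complex of the order complex of `P`
(we identify the injective `P`-graded chain map `φ` with the inclusion of its image) with:
`S_i(P) = ⊕_{x ∈ P} S_i(P)^{(x)}` with `S_i(P)^{(x)}` contained in the span of the order
chains with largest element `x` (`graded`); `∂(S_i(P)^{(x)}) ⊆ ⊕_{y<x} S_{i-1}(P)^{(y)}`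
(`strict`; for degree `0` the boundary lands in `C̃₋₁ = K` automatically); (S1)
`dim_K S_i(P)^{(x)} = dim_K H̃_{i-1}(P_{<x})` (`dim_eq`, the dimension of the reduced
homology being the dimension of the cycles minus the dimension of the boundaries); and
(S2) for every order ideal `J ⊆ P` the inclusion `S_*(P)^J ⊆ C̃_*(J)` induces an
isomorphism on homology (`quasiIso`: surjectivity and injectivity of the induced map). -/
structure SynorComplex : Type where
  S : (n : ℕ) → P → Submodule K (CGrp K P (n + 1))
  graded : ∀ (n : ℕ) (x : P),
    S n x ≤ Finsupp.supported K K {c : OChain P (n + 1) | c.1 0 = x}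
  strict : ∀ (n : ℕ) (x : P), ∀ f ∈ S (n + 1) x,
    cbdry K P (n + 1) f ∈ ⨆ y ∈ Set.Iio x, S n y
  dim_eq : ∀ (n : ℕ) (x : P),
    Module.finrank K ↥(S n x) =
      Module.finrank K ↥(cyclesAt K {y : P // y < x} n) -
        Module.finrank K ↥(boundariesIn K {y : P // y < x} n)
  quasiIso : ∀ J : Set P, IsLowerSet J → ∀ nn : ℕ,
    (∀ z ∈ cyclesAt K P nn ⊓ chainsIn K P J nn,
        ∃ a ∈ cyclesAt K P nn ⊓ idealPart K P S J nn,
          z - a ∈ Submodule.map (cbdry K P nn) (chainsIn K P J (nn + 1))) ∧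
    (∀ a ∈ idealPart K P S J nn,
        a ∈ Submodule.map (cbdry K P nn) (chainsIn K P J (nn + 1)) →
        a ∈ Submodule.map (cbdry K P nn) (idealPart K P S J (nn + 1)))

end Synor

section Cone
variable (P : Type) [PartialOrder P]

/-- Prepend `x` to an order chain all of whose elements are smaller than `x`. -/
def ocons {n : ℕ} (x : P) (c : OChain P n) (h : ∀ i, c.1 i < x) : OChain P (n + 1) :=
  ⟨Fin.cons x c.1, fun i j hij => by
    induction j using Fin.cases with
    | zero => exact absurd hij (Fin.not_lt_zero i)
    | succ j =>
      induction i using Fin.cases with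
      | zero => simpa using h j
      | succ i => simpa using c.2 (Fin.succ_lt_succ_iff.mp hij)⟩

open Classical in
/-- The cone operator with apex `x`: prepend `x` to the chains lying strictly below `x`, and
send every other chain to `0`. -/
def cone (n : ℕ) (x : P) : CGrp K P n →ₗ[K] CGrp K P (n + 1) :=
  Finsupp.lsum K fun c =>
    if h : ∀ i, c.1 i < x then Finsupp.lsingle (ocons P x c h) else 0

variable {P}

lemma cone_single {n : ℕ} {x : P} {c : OChain P n} (h : ∀ i, c.1 i < x) (a : K) :
    cone K P n x (single c a) = single (ocons P x c h) a := by
  simp [cone, h]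

lemma cone_single_eq_zero {n : ℕ} {x : P} {c : OChain P n} (h : ¬ ∀ i, c.1 i < x) (a : K) :
    cone K P n x (single c a) = 0 := by
  simp only [cone, Finsupp.lsum_single, dif_neg h, LinearMap.zero_apply]

lemma cbdry_single {n : ℕ} (c : OChain P (n + 1)) (a : K) :
    cbdry K P n (single c a) = ∑ k : Fin (n + 1), (-1 : K) ^ (k : ℕ) • single (odel P k c) a := by
  simp only [cbdry, Finsupp.lsum_single, LinearMap.sum_apply, LinearMap.smul_apply,
    Finsupp.lsingle_apply]

lemma odel_zero_ocons {n : ℕ} {x : P} {c : OChain P n} (h : ∀ i, c.1 i < x) :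
    odel P 0 (ocons P x c h) = c :=
  Subtype.ext (funext fun i => by simp [odel, ocons])

lemma odel_succ_ocons {n : ℕ} {x : P} {c : OChain P (n + 1)} (h : ∀ i, c.1 i < x)
    (k : Fin (n + 1)) :
    odel P k.succ (ocons P x c h) = ocons P x (odel P k c) fun i => h (k.succAbove i) :=
  Subtype.ext (funext fun i => by
    induction i using Fin.cases with
    | zero => simp [odel, ocons]
    | succ i => simp [odel, ocons, Fin.removeNth])

lemma odel_zero_lt {n : ℕ} (c : OChain P (n + 1)) (i : Fin n) : (odel P 0 c).1 i < c.1 0 :=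
  c.2 (Fin.succ_pos i)

lemma ocons_odel_zero {n : ℕ} (c : OChain P (n + 1)) :
    ocons P (c.1 0) (odel P 0 c) (odel_zero_lt c) = c :=
  Subtype.ext (funext fun i => by
    induction i using Fin.cases with
    | zero => simp [ocons]
    | succ i => simp [odel, ocons])

lemma cone_cone (n : ℕ) (x : P) (f : CGrp K P n) :
    cone K P (n + 1) x (cone K P n x f) = 0 := by
  induction f using Finsupp.induction_linear with
  | zero => simp
  | add f g hf hg => simp [hf, hg]
  | single c a =>
    by_cases h : ∀ i, c.1 i < x
    · rw [cone_single K h, cone_single_eq_zero]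
      intro h'
      exact lt_irrefl x (by simpa [ocons] using h' 0)
    · rw [cone_single_eq_zero K h, map_zero]

lemma cbdry_cone_zero (x : P) (f : CGrp K P 0) : cbdry K P 0 (cone K P 0 x f) = f := by
  induction f using Finsupp.induction_linear with
  | zero => simp
  | add f g hf hg => simp [hf, hg]
  | single c a =>
    rw [cone_single K (fun i => i.elim0), cbdry_single]
    simp [odel_zero_ocons]

lemma cbdry_ocons {n : ℕ} {x : P} {c : OChain P (n + 1)} (h : ∀ i, c.1 i < x) (a : K) :
    cbdry K P (n + 1) (single (ocons P x c h) a) =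
      single c a - cone K P n x (cbdry K P n (single c a)) := by
  rw [cbdry_single, Fin.sum_univ_succ, odel_zero_ocons, cbdry_single, map_sum, sub_eq_add_neg,
    ← Finset.sum_neg_distrib]
  congr 1
  · simp
  · refine Finset.sum_congr rfl fun k _ => ?_
    rw [odel_succ_ocons, map_smul, cone_single K fun i => h (k.succAbove i), Fin.val_succ, pow_succ,
      mul_neg_one, neg_smul]

lemma cbdry_single_succ {n : ℕ} (c : OChain P (n + 2)) (a : K) :
    cbdry K P (n + 1) (single c a) =
      single (odel P 0 c) a - cone K P n (c.1 0) (cbdry K P n (single (odel P 0 c) a)) :=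
  (congrArg (fun d => cbdry K P (n + 1) (single d a)) (ocons_odel_zero c)).symm.trans
    (cbdry_ocons K (odel_zero_lt c) a)

/-- The cone operator is a contracting homotopy on chains lying weakly below the apex. -/
lemma cbdry_cone_add_cone_cbdry {n : ℕ} {x : P} {f : CGrp K P (n + 1)}
    (hf : f ∈ chainsIn K P (Set.Iic x) (n + 1)) :
    cbdry K P (n + 1) (cone K P (n + 1) x f) + cone K P n x (cbdry K P n f) = f := by
  rw [chainsIn, Finsupp.supported_eq_span_single] at hf
  induction hf using Submodule.span_induction with
  | zero => simp
  | add f g _ _ hf hg =>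
    simp only [map_add]
    nth_rw 3 [← hf]
    nth_rw 3 [← hg]
    abel
  | smul a f _ hf => simp only [map_smul, ← smul_add, hf]
  | mem f hf =>
    obtain ⟨c, hc, rfl⟩ := hf
    by_cases h : c.1 0 = x
    · subst h
      rw [cone_single_eq_zero K (fun h => lt_irrefl _ (h 0)), map_zero, zero_add]
      cases n with
      | zero =>
        rw [cbdry_single]
        simp [cone_single K (odel_zero_lt c), ocons_odel_zero]
      | succ n =>
        rw [cbdry_single_succ, map_sub, cone_cone, sub_zero, cone_single K (odel_zero_lt c),
          ocons_odel_zero]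
    · have hlt : ∀ i, c.1 i < x := fun i =>
        (c.2.antitone (Fin.zero_le i)).trans_lt (lt_of_le_of_ne (hc 0) h)
      rw [cone_single K hlt, cbdry_ocons, sub_add_cancel]

lemma single_mem_chainsIn_Iic {n : ℕ} (c : OChain P (n + 1)) (a : K) :
    single c a ∈ chainsIn K P (Set.Iic (c.1 0)) (n + 1) :=
  Finsupp.single_mem_supported K _ fun r => c.2.antitone (Fin.zero_le r)

lemma cbdry_mem_chainsIn {n : ℕ} {J : Set P} {f : CGrp K P (n + 1)}
    (hf : f ∈ chainsIn K P J (n + 1)) : cbdry K P n f ∈ chainsIn K P J n := by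
  rw [chainsIn, Finsupp.supported_eq_span_single] at hf
  induction hf using Submodule.span_induction with
  | zero => simp
  | add f g _ _ hf hg => simpa using Submodule.add_mem _ hf hg
  | smul a f _ hf => simpa using Submodule.smul_mem _ a hf
  | mem f hf =>
    obtain ⟨c, hc, rfl⟩ := hf
    rw [cbdry_single]
    exact Submodule.sum_mem _ fun k _ => Submodule.smul_mem _ _
      (Finsupp.single_mem_supported K _ fun r => hc _)

lemma cbdry_cbdry (n : ℕ) (f : CGrp K P (n + 2)) :
    cbdry K P n (cbdry K P (n + 1) f) = 0 := by
  induction n with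
  | zero =>
    induction f using Finsupp.induction_linear with
    | zero => simp
    | add f g hf hg => simp [hf, hg]
    | single c a =>
      rw [cbdry_single_succ, map_sub, cbdry_cone_zero, sub_self]
  | succ n ih =>
    induction f using Finsupp.induction_linear with
    | zero => simp
    | add f g hf hg => simp [hf, hg]
    | single c a =>
      have hmem : cbdry K P (n + 1) (single (odel P 0 c) a) ∈
          chainsIn K P (Set.Iic (c.1 0)) (n + 1) :=
        cbdry_mem_chainsIn K (Finsupp.single_mem_supported K _ fun r => (odel_zero_lt c r).le)
      have key := cbdry_cone_add_cone_cbdry K hmem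
      rw [ih, map_zero, add_zero] at key
      rw [cbdry_single_succ, map_sub, key, sub_self]

lemma cone_mem_chainsIn {n : ℕ} {x : P} (f : CGrp K P n) :
    cone K P n x f ∈ chainsIn K P (Set.Iic x) (n + 1) := by
  induction f using Finsupp.induction_linear with
  | zero => simp
  | add f g hf hg => simpa using Submodule.add_mem _ hf hg
  | single c a =>
    by_cases h : ∀ i, c.1 i < x
    · rw [cone_single K h]
      refine Finsupp.single_mem_supported K _ fun r => ?_
      induction r using Fin.cases with
      | zero => simp [ocons]
      | succ r => simpa [ocons] using (h r).le
    · rw [cone_single_eq_zero K h]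
      exact Submodule.zero_mem _

/-- The chain complex of a principal order ideal is acyclic. -/
lemma cycle_mem_map_cbdry_chainsIn_Iic {n : ℕ} {x : P} {f : CGrp K P n}
    (hcyc : f ∈ cyclesAt K P n) (hf : f ∈ chainsIn K P (Set.Iic x) n) :
    f ∈ Submodule.map (cbdry K P n) (chainsIn K P (Set.Iic x) (n + 1)) := by
  refine ⟨cone K P n x f, cone_mem_chainsIn K f, ?_⟩
  cases n with
  | zero => exact cbdry_cone_zero K x f
  | succ n =>
    have h := cbdry_cone_add_cone_cbdry K hf
    rwa [LinearMap.mem_ker.mp hcyc, map_zero, add_zero] at h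

end Cone

section Retraction
variable {P : Type} [PartialOrder P]

lemma idealPart_mono (S : (n : ℕ) → P → Submodule K (CGrp K P (n + 1))) {I J : Set P}
    (h : I ⊆ J) (n : ℕ) : idealPart K P S I n ≤ idealPart K P S J n := by
  cases n with
  | zero => exact le_rfl
  | succ n => exact biSup_mono fun _ hx => h hx

variable {K}

namespace SynorComplex

lemma idealPart_le_chainsIn (σ : SynorComplex K P) {J : Set P} (hJ : IsLowerSet J) (n : ℕ) :
    idealPart K P σ.S J n ≤ chainsIn K P J n := by
  cases n with
  | zero =>
    intro f _
    exact (Finsupp.mem_supported K f).mpr fun c _ r => r.elim0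
  | succ n =>
    refine iSup₂_le fun x hx => (σ.graded n x).trans (Finsupp.supported_mono ?_)
    rintro c rfl r
    exact hJ (c.2.antitone (Fin.zero_le r)) hx

/-- The part of a synor complex over a principal order ideal is acyclic. -/
lemma exists_cbdry_eq_of_mem_cyclesAt (σ : SynorComplex K P) {n : ℕ} {x : P} {f : CGrp K P n}
    (hf : f ∈ idealPart K P σ.S (Set.Iic x) n) (hcyc : f ∈ cyclesAt K P n) :
    ∃ g ∈ idealPart K P σ.S (Set.Iic x) (n + 1), cbdry K P n g = f :=
  (σ.quasiIso (Set.Iic x) (isLowerSet_Iic x) n).2 f hf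
    (cycle_mem_map_cbdry_chainsIn_Iic K hcyc (σ.idealPart_le_chainsIn (isLowerSet_Iic x) n hf))

/-- The conditions on one component of a retraction onto a synor complex that allow the next
component to be constructed. -/
structure IsRetractionAt (σ : SynorComplex K P) (n : ℕ) (ρ : CGrp K P n →ₗ[K] CGrp K P n) :
    Prop where
  mem_Iic : ∀ x, ∀ f ∈ chainsIn K P (Set.Iic x) n, ρ f ∈ idealPart K P σ.S (Set.Iic x) n
  mem_univ : ∀ f, ρ f ∈ idealPart K P σ.S Set.univ n
  mem_cycles : ∀ f, ρ (cbdry K P n f) ∈ cyclesAt K P n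

lemma isRetractionAt_zero (σ : SynorComplex K P) : σ.IsRetractionAt 0 LinearMap.id :=
  ⟨fun _ _ _ => Submodule.mem_top, fun _ => Submodule.mem_top, fun _ => Submodule.mem_top⟩

lemma IsRetractionAt.exists_succ {σ : SynorComplex K P} {n : ℕ}
    {ρ : CGrp K P n →ₗ[K] CGrp K P n} (hρ : σ.IsRetractionAt n ρ) :
    ∃ ρ' : CGrp K P (n + 1) →ₗ[K] CGrp K P (n + 1), σ.IsRetractionAt (n + 1) ρ' ∧
      ρ.comp (cbdry K P n) = (cbdry K P n).comp ρ' := by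
  have hlift : ∀ c : OChain P (n + 1), ∃ g ∈ idealPart K P σ.S (Set.Iic (c.1 0)) (n + 1),
      cbdry K P n g = ρ (cbdry K P n (single c 1)) := fun c =>
    σ.exists_cbdry_eq_of_mem_cyclesAt
      (hρ.mem_Iic _ _ (cbdry_mem_chainsIn K (single_mem_chainsIn_Iic K c 1))) (hρ.mem_cycles _)
  choose g hg hbg using hlift
  have hcomm : ρ.comp (cbdry K P n) = (cbdry K P n).comp (Finsupp.linearCombination K g) := by
    ext1 c
    ext1
    simp [hbg]
  refine ⟨Finsupp.linearCombination K g, ⟨fun x f hf => ?_, fun f => ?_, fun f => ?_⟩, hcomm⟩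
  · rw [Finsupp.linearCombination_apply]
    refine Submodule.sum_mem _ fun c hc => Submodule.smul_mem _ _ ?_
    exact idealPart_mono K σ.S (Set.Iic_subset_Iic.mpr ((Finsupp.mem_supported K f).mp hf hc 0)) _
      (hg c)
  · rw [Finsupp.linearCombination_apply]
    exact Submodule.sum_mem _ fun c _ => Submodule.smul_mem _ _
      (idealPart_mono K σ.S (Set.subset_univ _) _ (hg c))
  · refine LinearMap.mem_ker.mpr ?_
    rw [← LinearMap.comp_apply, ← hcomm, LinearMap.comp_apply, cbdry_cbdry, map_zero]

end SynorComplex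

end Retraction

/-- Let `P` be a finite poset and `S_*(P) ⊆ C̃_*(P)` a synor complex
for `P`.  Then for each `k ≥ -1` (level `nn = k + 1 ≥ 0`) there is a `K`-linear map
`ρ_k : C̃_k(P) → S_k(P)` (encoded as an endomorphism of `C̃` with range inside `S`) with:
(R0) `ρ₋₁` is the identity on `C̃₋₁(P) = K`;
(R1) `ρ_{k-1} ∘ ∂_k = ∂_k ∘ ρ_k` for all `k ≥ 0`;
(R2) for every order chain `c = (x₀ > ⋯ > x_k)`, `ρ_k(c)` is supported in `P_{≤ x₀}`,
i.e. `ρ_k(c) ∈ ⊕_{y ≤ x₀} S_k(P)^{(y)}`. -/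
theorem rho_exists (P : Type) [PartialOrder P] [Fintype P] (σ : SynorComplex K P) :
    ∃ ρ : (nn : ℕ) → CGrp K P nn →ₗ[K] CGrp K P nn,
      ρ 0 = LinearMap.id ∧
      (∀ nn : ℕ, ∀ f : CGrp K P nn, ρ nn f ∈ idealPart K P σ.S Set.univ nn) ∧
      (∀ nn : ℕ, (ρ nn).comp (cbdry K P nn) = (cbdry K P nn).comp (ρ (nn + 1))) ∧
      (∀ (nn : ℕ) (c : OChain P (nn + 1)),
        ρ (nn + 1) (Finsupp.single c 1) ∈ ⨆ y ∈ Set.Iic (c.1 0), σ.S nn y) := by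
  choose next hnext hcomm using
    fun (n : ℕ) (s : {ρ : CGrp K P n →ₗ[K] CGrp K P n // σ.IsRetractionAt n ρ}) =>
      s.2.exists_succ
  let ρ : (n : ℕ) → {ρ : CGrp K P n →ₗ[K] CGrp K P n // σ.IsRetractionAt n ρ} := fun n =>
    Nat.rec ⟨LinearMap.id, σ.isRetractionAt_zero⟩ (fun n s => ⟨next n s, hnext n s⟩) n
  exact ⟨fun n => (ρ n).1, rfl, fun n => (ρ n).2.mem_univ, fun n => hcomm n (ρ n),
    fun n c => (ρ (n + 1)).2.mem_Iic _ _ (single_mem_chainsIn_Iic K c 1)⟩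

end
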